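/- Let G be a finite group. The function ψ : G → ℕ defined by ψ(g) = |{(x,y) ∈ G × G : [x,y] = g}| satisfies ψ(g) = Σ_{χ ∈ Irr(G)} (|G|/χ(1)) χ(g) for all g ∈ G. -/

import Mathlib

open scoped BigOperators

/-- The commutator `[a,b] = a⁻¹b⁻¹ab`. -/
def gcomm {G : Type*} [Group G] (a b : G) : G := a⁻¹ * b⁻¹ * a * b

/-- Left-normed iterated commutator of a list of group elements. -/
def lcomm {G : Type*} [Group G] : List G → G
  | [] => 1
  | a :: t => t.foldl gcomm a

/-- `pgen H K n m g` is the probability that a randomly chosen left-normed commutator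
of weight `n + m` on `Hⁿ × Kᵐ` equals `g`. -/
noncomputable def pgen {G : Type*} [Group G] (H K : Subgroup G) (n m : ℕ) (g : G) : ℚ :=
  (Nat.card {z : (Fin n → H) × (Fin m → K) //
      lcomm (List.ofFn (fun i => ((z.1 i : G))) ++ List.ofFn (fun j => ((z.2 j : G)))) = g} : ℚ) /
    ((Nat.card H : ℚ) ^ n * (Nat.card K : ℚ) ^ m)

/-- The set of irreducible complex characters of `G`. -/
noncomputable def Irr (G : Type) [Group G] : Set (G → ℂ) :=
  {f | ∃ V : FDRep ℂ G, CategoryTheory.Simple V ∧ f = V.character}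

/-!
Class functions on `G` are spanned by the irreducible characters, so by orthogonality it suffices
to compute the inner product of `ψ` with each irreducible character `χ`, that is, to evaluate
`∑ x, ∑ y, χ [x, y]⁻¹`. Since `[x, y]⁻¹ = (y⁻¹ x⁻¹ y) x` and, by Schur's lemma, the sum of the
conjugates of `x⁻¹` acts on the representation as the scalar `|G| χ(x⁻¹) / χ(1)`, the double sum is
`|G| / χ(1) * ∑ x, χ(x⁻¹) χ(x) = |G|² / χ(1)`.
-/

open CategoryTheory

universe u v

lemma sum_card_fiber_mul {R α β : Type*} [Semiring R] [Fintype α] [Fintype β] (φ : α → β)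
    (F : β → R) : ∑ b, (Nat.card {a // φ a = b} : R) * F b = ∑ a, F (φ a) := by
  classical
  simp only [← Finset.sum_fiberwise' Finset.univ φ F, Finset.sum_const, nsmul_eq_mul,
    Nat.card_eq_fintype_card, Fintype.card_subtype]

section Commutator

variable {G H : Type*} [Group G] [Group H]

lemma map_gcomm (f : G →* H) (x y : G) : f (gcomm x y) = gcomm (f x) (f y) := by
  simp only [gcomm, map_mul, map_inv]

lemma gcomm_inv (x y : G) : (gcomm x y)⁻¹ = y⁻¹ * x⁻¹ * y * x := by
  simp only [gcomm, mul_inv_rev, inv_inv, mul_assoc]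

lemma card_gcomm_eq_map (e : G ≃* H) (g : G) :
    Nat.card {p : H × H // gcomm p.1 p.2 = e g} = Nat.card {p : G × G // gcomm p.1 p.2 = g} :=
  (Nat.card_congr <| (e.toEquiv.prodCongr e.toEquiv).subtypeEquiv fun p ↦ by
    rw [← e.injective.eq_iff]
    exact iff_of_eq <| congrArg (· = e g) <| map_gcomm e.toMonoidHom p.1 p.2).symm

end Commutator

section ClassFunction

variable {G : Type*} [Group G]

/-- A class function on a group `G` is a function that is constant on conjugacy classes. The values
lie in an arbitrary type, so that the notion covers `ℕ`-valued counting functions. -/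
def IsClassFunction {α : Type*} (f : G → α) : Prop :=
  ∀ g h, f (h * g * h⁻¹) = f g

lemma isClassFunction_card_gcomm :
    IsClassFunction fun g : G ↦ Nat.card {p : G × G // gcomm p.1 p.2 = g} :=
  fun g h ↦ card_gcomm_eq_map (MulAut.conj h) g

end ClassFunction

section AbsolutelyIrreducible

variable {k G V : Type*} [Field k] [Group G] [AddCommGroup V] [Module k V]
  {ρ : Representation k G V}

lemma exists_smul_one_eq_of_commute (hρ : Module.finrank k (ρ.IntertwiningMap ρ) = 1)
    {T : Module.End k V} (hT : ∀ g, Commute T (ρ g)) : ∃ c : k, c • 1 = T := by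
  have : Nontrivial (ρ.IntertwiningMap ρ) := Module.nontrivial_of_finrank_pos (R := k) (by lia)
  obtain ⟨c, hc⟩ := (finrank_eq_one_iff_of_nonzero' (1 : ρ.IntertwiningMap ρ) one_ne_zero).mp hρ
    ⟨T, hT⟩
  exact ⟨c, congrArg Representation.IntertwiningMap.toLinearMap hc⟩

lemma character_one_smul_eq_trace_smul_one (hρ : Module.finrank k (ρ.IntertwiningMap ρ) = 1)
    {T : Module.End k V} (hT : ∀ g, Commute T (ρ g)) :
    ρ.character 1 • T = LinearMap.trace k V T • 1 := by
  obtain ⟨c, rfl⟩ := exists_smul_one_eq_of_commute hρ hT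
  rw [map_smul, smul_smul, Representation.character, map_one, smul_eq_mul, mul_comm]

variable [Fintype G]

lemma IsClassFunction.character_one_smul_sum_smul {f : G → k} (hf : IsClassFunction f)
    (hρ : Module.finrank k (ρ.IntertwiningMap ρ) = 1) :
    ρ.character 1 • ∑ g, f g • ρ g⁻¹ = (∑ g, f g * ρ.character g⁻¹) • 1 := by
  have hcomm (h : G) : Commute (∑ g, f g • ρ g⁻¹) (ρ h) := by
    rw [commute_iff_eq, Finset.sum_mul, Finset.mul_sum]
    refine Fintype.sum_equiv (MulAut.conj h⁻¹).toEquiv _ _ fun g ↦ ?_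
    have hg : f (h⁻¹ * (g * h)) = f g := by simpa [mul_assoc] using hf g h⁻¹
    simp [hg, ← map_mul, mul_assoc]
  rw [character_one_smul_eq_trace_smul_one hρ hcomm]
  simp only [map_sum, map_smul, smul_eq_mul, Representation.character]

lemma character_one_smul_sum_conj (hρ : Module.finrank k (ρ.IntertwiningMap ρ) = 1) (x : G) :
    ρ.character 1 • ∑ y, ρ (y⁻¹ * x * y) = (Nat.card G * ρ.character x) • 1 := by
  have hcomm (h : G) : Commute (∑ y, ρ (y⁻¹ * x * y)) (ρ h) := by
    rw [commute_iff_eq, Finset.sum_mul, Finset.mul_sum]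
    refine Fintype.sum_equiv (Equiv.mulRight h) _ _ fun y ↦ ?_
    simp [← map_mul, mul_assoc]
  have htrace (y : G) : LinearMap.trace k V (ρ (y⁻¹ * x * y)) = ρ.character x := by
    rw [← ρ.char_conj x y⁻¹, inv_inv, Representation.character]
  rw [character_one_smul_eq_trace_smul_one hρ hcomm]
  rw [map_sum, Finset.sum_congr rfl fun y _ ↦ htrace y, Finset.sum_const, Finset.card_univ,
    nsmul_eq_mul, Nat.card_eq_fintype_card]

lemma character_one_mul_sum_character_conj_mul
    (hρ : Module.finrank k (ρ.IntertwiningMap ρ) = 1) (x z : G) :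
    ρ.character 1 * ∑ y, ρ.character (y⁻¹ * x * y * z) =
      Nat.card G * ρ.character x * ρ.character z := by
  have h := congrArg (fun T ↦ LinearMap.trace k V (T * ρ z)) (character_one_smul_sum_conj hρ x)
  simpa only [Representation.character, smul_mul_assoc, Finset.sum_mul, one_mul,
    ← map_mul, map_smul, map_sum, smul_eq_mul] using h

variable [FiniteDimensional k V] [NeZero (Nat.card G : k)]

lemma sum_character_mul_character_inv (hρ : Module.finrank k (ρ.IntertwiningMap ρ) = 1) :
    ∑ g, ρ.character g * ρ.character g⁻¹ = Nat.card G := by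
  have hG : (Nat.card G : k) ≠ 0 := NeZero.ne _
  have := invertibleOfNonzero hG
  have h := ρ.card_inv_mul_sum_char_mul_char_eq_finrank ρ
  rwa [hρ, Nat.cast_one, inv_mul_eq_one₀ hG, eq_comm] at h

omit [Fintype G] in
-- In positive characteristic `χ(1) = 0` is not excluded by `dim V ≠ 0`: instead, it would force
-- `|G| χ(x) χ(x⁻¹) = 0` for all `x`, contradicting that `χ` has norm `1`.
lemma character_one_ne_zero [Finite G] (hρ : Module.finrank k (ρ.IntertwiningMap ρ) = 1) :
    ρ.character 1 ≠ 0 := by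
  intro h0
  have := Fintype.ofFinite G
  have hG : (Nat.card G : k) ≠ 0 := NeZero.ne _
  have hzero (x : G) : ρ.character x * ρ.character x⁻¹ = 0 := by
    have h := character_one_mul_sum_character_conj_mul hρ x x⁻¹
    rw [h0, zero_mul, mul_assoc] at h
    exact (mul_eq_zero.mp h.symm).resolve_left hG
  refine hG ?_
  rw [← sum_character_mul_character_inv hρ, Finset.sum_eq_zero fun x _ ↦ hzero x]

theorem sum_sum_character_gcomm_inv (hρ : Module.finrank k (ρ.IntertwiningMap ρ) = 1) :
    ∑ x, ∑ y, ρ.character (gcomm x y)⁻¹ = (Nat.card G : k) ^ 2 / ρ.character 1 := by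
  rw [eq_div_iff (character_one_ne_zero hρ), mul_comm]
  calc ρ.character 1 * ∑ x, ∑ y, ρ.character (gcomm x y)⁻¹
      = ∑ x, Nat.card G * ρ.character x⁻¹ * ρ.character x := by
        simp only [gcomm_inv, Finset.mul_sum _ _ (ρ.character 1),
          ← character_one_mul_sum_character_conj_mul hρ]
    _ = Nat.card G * ∑ x, ρ.character x * ρ.character x⁻¹ := by
        simp only [Finset.mul_sum, mul_assoc, mul_comm (ρ.character _⁻¹)]
    _ = (Nat.card G : k) ^ 2 := by rw [sum_character_mul_character_inv hρ, sq]

end AbsolutelyIrreducible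

section GroupAlgebraModule

variable {k G M : Type*} [Field k] [Group G] [AddCommGroup M] [Module k M]
  [Module (MonoidAlgebra k G) M] [IsScalarTower k (MonoidAlgebra k G) M]

lemma asAlgebraHom_ofModule'_apply (a : MonoidAlgebra k G) (m : M) :
    (Representation.ofModule' (k := k) (G := G) M).asAlgebraHom a m = a • m := by
  rw [Representation.asAlgebraHom, Representation.ofModule', Equiv.apply_symm_apply,
    Algebra.lsmul_coe]

variable (k G M) in
lemma isIrreducible_ofModule' [IsSimpleModule (MonoidAlgebra k G) M] :
    (Representation.ofModule' (k := k) (G := G) M).IsIrreducible := by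
  rw [Representation.irreducible_iff_isSimpleModule_asModule]
  let ρ := Representation.ofModule' (k := k) (G := G) M
  let e : ρ.asModule ≃ₗ[MonoidAlgebra k G] M :=
    { ρ.asModuleEquiv.toAddEquiv with
      map_smul' a m :=
        (ρ.asModuleEquiv_map_smul a m).trans <| asAlgebraHom_ofModule'_apply a _ }
  exact IsSimpleModule.congr e

end GroupAlgebraModule

section Simple

variable {k : Type u} [Field k]

lemma finrank_intertwiningMap_eq_finrank_hom {G : Type v} [Group G] (V W : FDRep k G) :
    Module.finrank k (Representation.IntertwiningMap V.ρ W.ρ) = Module.finrank k (V ⟶ W) :=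
  ((Representation.invariantsEquivIntertwiningMap _ _).symm.trans
    (Representation.linHom.invariantsEquivFDRepHom V W)).finrank_eq

variable [IsAlgClosed k]

lemma finrank_intertwiningMap_self_of_simple {G : Type v} [Group G] (V : FDRep k G) [Simple V] :
    Module.finrank k (Representation.IntertwiningMap V.ρ V.ρ) = 1 := by
  rw [finrank_intertwiningMap_eq_finrank_hom, finrank_endomorphism_simple_eq_one]

variable {G : Type u} [Group G] [Finite G] [NeZero (Nat.card G : k)]

lemma simple_of_isIrreducible {V : Type u} [AddCommGroup V] [Module k V] [FiniteDimensional k V]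
    (ρ : Representation k G V) [ρ.IsIrreducible] : Simple (FDRep.of ρ) := by
  rw [FDRep.simple_iff_end_is_rank_one, ← finrank_intertwiningMap_eq_finrank_hom, FDRep.of_ρ']
  exact Representation.IsIrreducible.finrank_intertwiningMap_self ρ

lemma eq_zero_of_asAlgebraHom_simple_eq_zero {a : MonoidAlgebra k G}
    (ha : ∀ (V : FDRep k G) [Simple V], Representation.asAlgebraHom V.ρ a = 0) : a = 0 := by
  suffices a ∈ Ring.jacobson (MonoidAlgebra k G) by
    rwa [IsSemisimpleRing.jacobson_eq_bot] at this
  rw [Ring.jacobson_eq_sInf_isMaximal, Submodule.mem_sInf]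
  intro I hI
  have : IsSimpleModule (MonoidAlgebra k G) (MonoidAlgebra k G ⧸ I) :=
    isSimpleModule_iff_isCoatom.mpr (Ideal.isMaximal_def.mp hI)
  have : FiniteDimensional k (MonoidAlgebra k G ⧸ I) := Module.Finite.trans (MonoidAlgebra k G) _
  let ρ := Representation.ofModule' (k := k) (G := G) (MonoidAlgebra k G ⧸ I)
  have : ρ.IsIrreducible := isIrreducible_ofModule' k G (MonoidAlgebra k G ⧸ I)
  have := simple_of_isIrreducible ρ
  have hρ : ρ.asAlgebraHom a = 0 := ha (FDRep.of ρ)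
  have h : Submodule.Quotient.mk (p := I) (a • 1) = 0 :=
    (asAlgebraHom_ofModule'_apply a _).symm.trans <|
      LinearMap.congr_fun hρ (Submodule.Quotient.mk 1)
  rwa [smul_eq_mul, mul_one, Submodule.Quotient.mk_eq_zero] at h

end Simple

section IrreducibleCharacters

/-- The irreducible characters of `G` over a field `k`, as functions `G → k`; over `ℂ` this is
`Irr G`. -/
def irreducibleCharacters (k : Type u) (G : Type v) [Field k] [Group G] : Set (G → k) :=
  {χ | ∃ V : FDRep k G, Simple V ∧ χ = V.character}

variable {k : Type u} {G : Type v} [Field k] [IsAlgClosed k] [Group G] [Fintype G]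
  [NeZero (Nat.card G : k)]

lemma sum_mul_inv_of_mem_irreducibleCharacters [DecidableEq (G → k)] {χ φ : G → k}
    (hχ : χ ∈ irreducibleCharacters k G) (hφ : φ ∈ irreducibleCharacters k G) :
    ∑ g, χ g * φ g⁻¹ = if χ = φ then (Nat.card G : k) else 0 := by
  obtain ⟨V, _, rfl⟩ := hχ
  obtain ⟨W, _, rfl⟩ := hφ
  split_ifs with h
  · rw [← h]
    exact sum_character_mul_character_inv (finrank_intertwiningMap_self_of_simple V)
  · have hG : (Nat.card G : k) ≠ 0 := NeZero.ne _
    have := invertibleOfNonzero hG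
    have horth := FDRep.char_orthonormal V W
    rw [if_neg fun ⟨i⟩ ↦ h (FDRep.char_iso i)] at horth
    exact (mul_eq_zero.mp horth).resolve_left (inv_ne_zero hG)

lemma sum_sum_mul_mul_inv_of_subset_irreducibleCharacters {s : Finset (G → k)}
    (hs : ↑s ⊆ irreducibleCharacters k G) (c : (G → k) → k) {φ : G → k} (hφ : φ ∈ s) :
    ∑ g, (∑ χ ∈ s, c χ * χ g) * φ g⁻¹ = c φ * Nat.card G := by
  classical
  calc ∑ g, (∑ χ ∈ s, c χ * χ g) * φ g⁻¹ = ∑ χ ∈ s, c χ * ∑ g, χ g * φ g⁻¹ := by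
        simp only [Finset.sum_mul, Finset.mul_sum, mul_assoc]
        exact Finset.sum_comm
    _ = ∑ χ ∈ s, c χ * if χ = φ then (Nat.card G : k) else 0 :=
        Finset.sum_congr rfl fun χ hχ ↦ by
          rw [sum_mul_inv_of_mem_irreducibleCharacters (hs hχ) (hs hφ)]
    _ = c φ * Nat.card G := by simp [hφ]

variable (k G) in
omit [Fintype G] in
lemma finite_irreducibleCharacters [Finite G] : (irreducibleCharacters k G).Finite := by
  have := Fintype.ofFinite G
  have hli : LinearIndepOn k id (irreducibleCharacters k G) := by
    rw [linearIndepOn_iff']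
    intro s c hs hc φ hφ
    have h := sum_sum_mul_mul_inv_of_subset_irreducibleCharacters hs c hφ
    have hzero (g : G) : ∑ χ ∈ s, c χ * χ g = 0 := by simpa using congrFun hc g
    simp only [hzero, zero_mul, Finset.sum_const_zero] at h
    exact (mul_eq_zero.mp h.symm).resolve_right (NeZero.ne _)
  exact Set.finite_coe_iff.mp hli.linearIndependent.finite

lemma sum_card_gcomm_mul_inv {χ : G → k} (hχ : χ ∈ irreducibleCharacters k G) :
    ∑ g, (Nat.card {p : G × G // gcomm p.1 p.2 = g} : k) * χ g⁻¹ = (Nat.card G : k) ^ 2 / χ 1 := by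
  obtain ⟨V, _, rfl⟩ := hχ
  rw [sum_card_fiber_mul (fun p : G × G ↦ gcomm p.1 p.2) fun g ↦ V.character g⁻¹,
    Fintype.sum_prod_type]
  exact sum_sum_character_gcomm_inv (finrank_intertwiningMap_self_of_simple V)

end IrreducibleCharacters

section Completeness

variable {k G : Type u} [Field k] [IsAlgClosed k] [Group G] [Fintype G] [NeZero (Nat.card G : k)]
  {f : G → k}

theorem IsClassFunction.eq_zero_of_sum_mul_inv_eq_zero (hf : IsClassFunction f)
    (h : ∀ χ ∈ irreducibleCharacters k G, ∑ g, f g * χ g⁻¹ = 0) : f = 0 := by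
  have hsum : ∑ g, MonoidAlgebra.single g⁻¹ (f g) = 0 := by
    refine eq_zero_of_asAlgebraHom_simple_eq_zero fun V hV ↦ ?_
    have hρ := finrank_intertwiningMap_self_of_simple V
    have hzero := hf.character_one_smul_sum_smul hρ
    rw [show ∑ g, f g * Representation.character V.ρ g⁻¹ = 0 from h _ ⟨V, hV, rfl⟩, zero_smul,
      smul_eq_zero_iff_right (character_one_ne_zero hρ)] at hzero
    simpa only [map_sum, Representation.asAlgebraHom_single] using hzero
  funext g
  have := congrArg (fun a : MonoidAlgebra k G ↦ a.coeff g⁻¹) hsum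
  classical
  simpa [Finsupp.finsetSum_apply, Finsupp.single_apply] using this

theorem IsClassFunction.eq_finsum_irreducibleCharacters (hf : IsClassFunction f) (g : G) :
    f g = ∑ᶠ χ ∈ irreducibleCharacters k G, (∑ x, f x * χ x⁻¹) / Nat.card G * χ g := by
  have hfin := finite_irreducibleCharacters k G
  have hs : ↑hfin.toFinset ⊆ irreducibleCharacters k G := hfin.coe_toFinset.subset
  set c : (G → k) → k := fun χ ↦ (∑ x, f x * χ x⁻¹) / Nat.card G
  have hclass : IsClassFunction fun x ↦ f x - ∑ χ ∈ hfin.toFinset, c χ * χ x := by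
    intro x y
    have hconj (χ) (hχ : χ ∈ hfin.toFinset) : χ (y * x * y⁻¹) = χ x := by
      obtain ⟨V, -, rfl⟩ := hs hχ
      exact V.char_conj x y
    simp only [hf x y]
    rw [Finset.sum_congr rfl fun χ hχ ↦ by rw [hconj χ hχ]]
  have hzero := hclass.eq_zero_of_sum_mul_inv_eq_zero fun φ hφ ↦ by
    simp only [sub_mul, Finset.sum_sub_distrib]
    rw [sum_sum_mul_mul_inv_of_subset_irreducibleCharacters hs c (hfin.mem_toFinset.mpr hφ),
      div_mul_cancel₀ _ (NeZero.ne _), sub_self]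
  rw [finsum_mem_eq_finite_toFinset_sum _ hfin]
  exact sub_eq_zero.mp (congrFun hzero g)

end Completeness

theorem stmt1_general {k G : Type u} [Field k] [IsAlgClosed k] [Group G] [Finite G]
    [NeZero (Nat.card G : k)] (g : G) :
    (Nat.card {p : G × G // gcomm p.1 p.2 = g} : k) =
      ∑ᶠ χ ∈ irreducibleCharacters k G, (Nat.card G : k) / χ 1 * χ g := by
  have := Fintype.ofFinite G
  have hclass : IsClassFunction fun g : G ↦ (Nat.card {p : G × G // gcomm p.1 p.2 = g} : k) :=
    fun g h ↦ congrArg Nat.cast (isClassFunction_card_gcomm g h)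
  rw [hclass.eq_finsum_irreducibleCharacters g]
  refine finsum_mem_congr rfl fun χ hχ ↦ ?_
  rw [sum_card_gcomm_mul_inv hχ, sq, mul_div_assoc, mul_div_cancel_left₀ _ (NeZero.ne _)]

theorem stmt1 (G : Type) [Group G] [Fintype G] (g : G) :
    (Nat.card {p : G × G // gcomm p.1 p.2 = g} : ℂ) =
      ∑ᶠ χ ∈ Irr G, ((Fintype.card G : ℂ) / χ 1) * χ g := by
  rw [← Nat.card_eq_fintype_card]
  exact stmt1_general g
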